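/- arXiv:1911.06450 — 3 statements merged into one kernel-verified Lean document; each statement's English description precedes it below -/
import Mathlib

section
/- Let G = ({1,…,N}, E) be a digraph without self-loops such that every vertex of {1,…,N} is reachable from vertex 1 by a directed path. Then there exists a weight vector w ∈ ℝ^{|E|} such that the associated Laplacian L(w) ∈ ℝ^{N×N} satisfies: (i) the pair (L(w), e₁) is controllable, where e₁ ∈ ℝ^N is the first standard basis vector, and (ii) L(w) has no repeated eigenvalues, i.e., its characteristic polynomial has N distinct complex roots. -/
open Matrix
open scoped Kronecker

noncomputable section

/-- Kalman-matrix controllability of the pair `(M, Q)`. -/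
def IsCtrb {R : Type*} [CommRing R] {ι κ : Type*} [Fintype ι] [Fintype κ] [DecidableEq ι]
    (M : Matrix ι ι R) (Q : Matrix ι κ R) : Prop :=
  (Matrix.of fun (i : ι) (jk : Fin (Fintype.card ι) × κ) =>
      (M ^ (jk.1 : ℕ) * Q) i jk.2).rank = Fintype.card ι

/-- Observability of `(M, c)`: controllability of `(Mᵀ, cᵀ)`. -/
def IsObsv {R : Type*} [CommRing R] {ι : Type*} [Fintype ι] [DecidableEq ι]
    (M : Matrix ι ι R) (c : Matrix (Fin 1) ι R) : Prop :=
  IsCtrb Mᵀ cᵀ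

/-- The weighted Laplacian of a digraph with edge set `E`:
`L(w)_{ij} = -w_{(j,i)}` for `i ≠ j` with `(j,i) ∈ E`, zero for other off-diagonal entries,
and diagonal entries making every row sum to zero. -/
def lapMat {R : Type*} [CommRing R] {N : ℕ} (E : Finset (Fin N × Fin N))
    (w : Fin N × Fin N → R) : Matrix (Fin N) (Fin N) R :=
  Matrix.of fun i j =>
    if i = j then ∑ k ∈ Finset.univ.filter (fun k => k ≠ i ∧ (k, i) ∈ E), w (k, i)
    else if (j, i) ∈ E then -w (j, i) else 0

/-- The `N × |I_u|` matrix whose columns are the standard basis vectors `e_i`, `i ∈ I_u`. -/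
def deltaMat {R : Type*} [CommRing R] {N : ℕ} (Iu : Finset (Fin N)) :
    Matrix (Fin N) {i // i ∈ Iu} R :=
  Matrix.of fun i j => if i = (j : Fin N) then 1 else 0

/-- Vertex `i` is reachable by a directed path (possibly of length zero) from a driving vertex. -/
def inputReachable {N : ℕ} (E : Finset (Fin N × Fin N)) (Iu : Finset (Fin N)) (i : Fin N) : Prop :=
  ∃ s ∈ Iu, Relation.ReflTransGen (fun a b => (a, b) ∈ E) s i

/-!
Put weights only on the edges of a spanning arborescence with parent map `p`, writing `d i` for the
weight of the edge into `i` and `d r = 0` at the root `r`. Row `i` of the Laplacian is then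
`d i • (eᵢ - e_{p i})`, so the matrix is triangular with respect to depth and has eigenvalues `d i`.
If these are distinct, back substitution along the path from `m` to `r` produces a left eigenvector
for `d m` whose entry at `r` is nonzero. For a simple spectrum, nonvanishing of the products of the
left eigenvectors with the input matrix gives controllability, because the Kalman matrix multiplied
by the matrix of left eigenvectors is a row-scaled Vandermonde matrix.
-/

section SimpleSpectrum

open Polynomial

theorem eq_prod_X_sub_C_of_isRoot {K ι : Type*} [Field K] [Fintype ι] {f : K[X]} (hf : f.Monic)
    (hdeg : f.natDegree = Fintype.card ι) {d : ι → K} (hd : Function.Injective d)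
    (hroot : ∀ i, f.IsRoot (d i)) : f = ∏ i, (X - C (d i)) := by
  have hdvd : ∏ i, (X - C (d i)) ∣ f :=
    Fintype.prod_dvd_of_coprime (pairwise_coprime_X_sub_C hd) fun i => dvd_iff_isRoot.mpr (hroot i)
  refine eq_of_monic_of_dvd_of_natDegree_le (monic_prod_X_sub_C d Finset.univ) hf hdvd ?_
  rw [hdeg, natDegree_finsetProd_X_sub_C_eq_card, Finset.card_univ]

theorem card_toFinset_roots_prod_X_sub_C {R ι : Type*} [CommRing R] [IsDomain R] [DecidableEq R]
    [Fintype ι] {d : ι → R} (hd : Function.Injective d) :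
    (∏ i, (X - C (d i))).roots.toFinset.card = Fintype.card ι := by
  rw [← Finset.prod_image (g := d) (f := fun a => X - C a) hd.injOn, roots_prod_X_sub_C,
    Finset.val_toFinset, Finset.card_image_of_injective _ hd, Finset.card_univ]

variable {ι : Type*} [Fintype ι] [DecidableEq ι]

theorem isRoot_charpoly_of_vecMul_eq_smul {R : Type*} [CommRing R] [IsDomain R]
    {M : Matrix ι ι R} {μ : R} {v : ι → R} (hv : v ≠ 0) (hvM : v ᵥ* M = μ • v) :
    M.charpoly.IsRoot μ := by
  rw [IsRoot.def, Matrix.eval_charpoly]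
  refine Matrix.exists_vecMul_eq_zero_iff.mp ⟨v, hv, ?_⟩
  rw [Matrix.vecMul_sub, hvM, Matrix.scalar_apply, ← Matrix.smul_one_eq_diagonal,
    Matrix.vecMul_smul, Matrix.vecMul_one, sub_self]

theorem charpoly_eq_prod_X_sub_C_of_vecMul_eq_smul {K : Type*} [Field K] {M : Matrix ι ι K}
    {d : ι → K} (hd : Function.Injective d) {v : ι → ι → K} (hv : ∀ k, v k ≠ 0)
    (hvM : ∀ k, v k ᵥ* M = d k • v k) : M.charpoly = ∏ k, (X - C (d k)) :=
  eq_prod_X_sub_C_of_isRoot M.charpoly_monic M.charpoly_natDegree_eq_dim hd fun k =>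
    isRoot_charpoly_of_vecMul_eq_smul (hv k) (hvM k)

theorem card_toFinset_roots_charpoly_map {K L : Type*} [Field K] [Field L] [DecidableEq L]
    (f : K →+* L) {M : Matrix ι ι K} {d : ι → K} (hd : Function.Injective d)
    (hM : M.charpoly = ∏ i, (X - C (d i))) :
    (M.map f).charpoly.roots.toFinset.card = Fintype.card ι := by
  rw [Matrix.charpoly_map, hM, Polynomial.map_prod]
  simp only [Polynomial.map_sub, map_X, map_C]
  exact card_toFinset_roots_prod_X_sub_C (f.injective.comp hd)

end SimpleSpectrum

section Controllability

theorem eq_zero_of_forall_sum_mul_pow_eq_zero {R ι : Type*} [CommRing R] [IsDomain R] [Fintype ι]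
    {d a : ι → R} (hd : Function.Injective d)
    (h : ∀ j < Fintype.card ι, ∑ i, a i * d i ^ j = 0) : a = 0 := by
  let e := Fintype.equivFin ι
  have hzero : a ∘ e.symm = 0 :=
    Matrix.eq_zero_of_forall_pow_sum_mul_pow_eq_zero (hd.comp e.symm.injective) fun j =>
      (e.symm.sum_comp fun i => a i * d i ^ (j : ℕ)).trans (h j j.isLt)
  funext i
  simpa using congrFun hzero (e i)

variable {ι κ : Type*} [Fintype ι] [DecidableEq ι]

theorem vecMul_pow_of_vecMul_eq_smul {R : Type*} [CommSemiring R] {M : Matrix ι ι R} {v : ι → R}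
    {μ : R} (h : v ᵥ* M = μ • v) (k : ℕ) : v ᵥ* M ^ k = μ ^ k • v := by
  induction k with
  | zero => simp
  | succ k ih =>
    rw [pow_succ, ← Matrix.vecMul_vecMul, ih, Matrix.smul_vecMul, h, smul_smul, pow_succ]

/-- The Kalman matrix `[Q, MQ, …, M^{n-1}Q]` of the pair `(M, Q)`, whose rank `IsCtrb` tests; column
`(j, c)` is column `c` of the block `M ^ j * Q`. -/
def kalmanMatrix {R : Type*} [CommRing R] (M : Matrix ι ι R) (Q : Matrix ι κ R) :
    Matrix ι (Fin (Fintype.card ι) × κ) R :=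
  Matrix.of fun i jc => (M ^ (jc.1 : ℕ) * Q) i jc.2

theorem vecMul_kalmanMatrix_of_vecMul_eq_smul {R : Type*} [CommRing R] {M : Matrix ι ι R}
    {v : ι → R} {μ : R} (h : v ᵥ* M = μ • v) (Q : Matrix ι κ R)
    (jc : Fin (Fintype.card ι) × κ) :
    (v ᵥ* kalmanMatrix M Q) jc = μ ^ (jc.1 : ℕ) * (v ᵥ* Q) jc.2 :=
  calc (v ᵥ* kalmanMatrix M Q) jc = (v ᵥ* (M ^ (jc.1 : ℕ) * Q)) jc.2 := rfl
    _ = μ ^ (jc.1 : ℕ) * (v ᵥ* Q) jc.2 := by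
      rw [← Matrix.vecMul_vecMul, vecMul_pow_of_vecMul_eq_smul h, Matrix.smul_vecMul,
        Pi.smul_apply, smul_eq_mul]

variable {K : Type*} [Field K] {M : Matrix ι ι K} {Q : Matrix ι κ K} {d : ι → K} {v : ι → ι → K}

theorem linearIndependent_vecMul_kalmanMatrix (hd : Function.Injective d)
    (hvM : ∀ k, v k ᵥ* M = d k • v k) (hvQ : ∀ k, v k ᵥ* Q ≠ 0) :
    LinearIndependent K fun k => v k ᵥ* kalmanMatrix M Q := by
  refine Fintype.linearIndependent_iff.mpr fun a ha k => ?_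
  obtain ⟨c, hc⟩ := Function.ne_iff.mp (hvQ k)
  have hsum : ∀ j < Fintype.card ι, ∑ i, a i * (v i ᵥ* Q) c * d i ^ j = 0 := fun j hj => by
    have hcol := congrFun ha (⟨j, hj⟩, c)
    simp only [Finset.sum_apply, Pi.smul_apply, vecMul_kalmanMatrix_of_vecMul_eq_smul (hvM _),
      smul_eq_mul, Pi.zero_apply] at hcol
    simpa only [mul_assoc, mul_comm (d _ ^ j)] using hcol
  have hk : a k * (v k ᵥ* Q) c = 0 :=
    congrFun (eq_zero_of_forall_sum_mul_pow_eq_zero hd hsum) k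
  exact (mul_eq_zero.mp hk).resolve_right hc

theorem isCtrb_of_vecMul_eq_smul [Fintype κ] (hd : Function.Injective d)
    (hvM : ∀ k, v k ᵥ* M = d k • v k) (hvQ : ∀ k, v k ᵥ* Q ≠ 0) : IsCtrb M Q := by
  have hrows : LinearIndependent K (Matrix.of v * kalmanMatrix M Q).row :=
    linearIndependent_vecMul_kalmanMatrix hd hvM hvQ
  refine le_antisymm (Matrix.rank_le_card_height (kalmanMatrix M Q)) ?_
  calc Fintype.card ι = (Matrix.of v * kalmanMatrix M Q).rank := hrows.rank_matrix.symm
    _ ≤ (kalmanMatrix M Q).rank := Matrix.rank_mul_le_right _ _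

end Controllability

/-- A spanning arborescence, rooted at `r`, of the digraph with edge relation `S`. It is encoded by
a parent map, whose value at `r` is irrelevant, together with a depth function that decreases
towards the root and so rules out cycles. -/
structure SpanningArborescence {V : Type*} (S : V → V → Prop) (r : V) where
  parent : V → V
  depth : V → ℕ
  rel_parent : ∀ j, j ≠ r → S (parent j) j
  depth_parent_lt : ∀ j, j ≠ r → depth (parent j) < depth j

namespace SpanningArborescence

variable {V : Type*} {S : V → V → Prop} {r : V}

theorem nonempty_of_forall_reflTransGen (h : ∀ j, Relation.ReflTransGen S r j) :
    Nonempty (SpanningArborescence S r) := by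
  let _ : Quiver V := ⟨fun a b => PLift (S a b)⟩
  have _ : Quiver.RootedConnected r := ⟨fun j => by
    induction h j with
    | refl => exact ⟨.nil⟩
    | tail _ hbc ih => exact ih.map fun q => q.cons ⟨hbc⟩⟩
  have hparent : ∀ j, ∃ i, j ≠ r → S i j ∧
      (Quiver.shortestPath r i).length < (Quiver.shortestPath r j).length := fun j => by
    cases hq : Quiver.shortestPath r j with
    | nil => exact ⟨r, fun hj => absurd rfl hj⟩
    | cons q e => exact ⟨_, fun _ => ⟨e.down, Nat.lt_succ_of_le (Quiver.shortest_path_spec r q)⟩⟩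
  choose p hp using hparent
  exact ⟨⟨p, fun j => (Quiver.shortestPath r j).length, fun j hj => (hp j hj).1,
    fun j hj => (hp j hj).2⟩⟩

theorem parent_ne (T : SpanningArborescence S r) {j : V} (hj : j ≠ r) : T.parent j ≠ j := fun h =>
  (T.depth_parent_lt j hj).ne (congrArg T.depth h)

theorem induction (T : SpanningArborescence S r) {motive : V → Prop} (root : motive r)
    (step : ∀ j, j ≠ r → motive (T.parent j) → motive j) (j : V) : motive j := by
  induction j using (measure T.depth).wf.induction with
  | _ j ih =>
    by_cases hj : j = r
    · exact hj ▸ root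
    · exact step j hj (ih _ (T.depth_parent_lt j hj))

/-- The edge weights that give the arborescence edge into `i` the weight `d i` and every other edge
the weight `0`. -/
def weight {R : Type*} [Zero R] [DecidableEq V] (T : SpanningArborescence S r) (d : V → R) :
    V × V → R :=
  fun e => if e.1 = T.parent e.2 then d e.2 else 0

/-- The Laplacian of the arborescence in which the edge into `i` has weight `d i`. The root has no
incoming edge, so this is meant for `d r = 0`. -/
def laplacian {R : Type*} [Ring R] [DecidableEq V] (T : SpanningArborescence S r) (d : V → R) :
    Matrix V V R :=
  Matrix.of fun i => d i • (Pi.single i 1 - Pi.single (T.parent i) 1)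

theorem lapMat_weight {R : Type*} [CommRing R] {N : ℕ} {E : Finset (Fin N × Fin N)} {r : Fin N}
    (T : SpanningArborescence (fun a b => (a, b) ∈ E) r) {d : Fin N → R} (hr : d r = 0) :
    lapMat E (T.weight d) = T.laplacian d := by
  ext i j
  by_cases hi : i = r
  · subst hi
    simp [lapMat, weight, laplacian, hr]
  · have hE := T.rel_parent i hi
    have hne := T.parent_ne hi
    rcases eq_or_ne i j with rfl | hij
    · simp [lapMat, weight, laplacian, hne, hE, hne.symm]
    · rcases eq_or_ne j (T.parent i) with rfl | hj
      · simp [lapMat, weight, laplacian, hij, hE, hne]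
      · simp [lapMat, weight, laplacian, hij, hj, hij.symm]

variable {K : Type*} [Field K] [Fintype V] [DecidableEq V] (T : SpanningArborescence S r)
  {d : V → K}

theorem single_vecMul_laplacian {R : Type*} [CommRing R] (d : V → R) (i : V) :
    Pi.single i 1 ᵥ* T.laplacian d = d i • (Pi.single i 1 - Pi.single (T.parent i) 1) :=
  Matrix.single_one_vecMul i (T.laplacian d)

-- The defect `(d m - μ) • Pi.single m 1` is what the induction along the path to the root needs:
-- it is cancelled by a multiple of the row of the next vertex and vanishes for `μ = d m`.
theorem exists_vecMul_laplacian_eq_smul_add_single (hr : d r = 0) (hd : ∀ j, j ≠ r → d j ≠ 0)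
    (μ : K) (m : V) (hμ : ∀ j, T.depth j < T.depth m → d j ≠ μ) :
    ∃ v : V → K, v r ≠ 0 ∧ v ᵥ* T.laplacian d = μ • v + (d m - μ) • Pi.single m 1 := by
  induction m using T.induction with
  | root =>
    refine ⟨Pi.single r 1, by simp, ?_⟩
    rw [single_vecMul_laplacian, hr]
    module
  | step m hm ih =>
    have hlt := T.depth_parent_lt m hm
    obtain ⟨v, hv, hvL⟩ := ih fun j hj => hμ j (hj.trans hlt)
    have hne : d (T.parent m) - μ ≠ 0 := sub_ne_zero.mpr (hμ _ hlt)
    obtain ⟨c, hc⟩ : ∃ c, c * (d (T.parent m) - μ) = d m := ⟨_, div_mul_cancel₀ _ hne⟩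
    have hc0 : c ≠ 0 := left_ne_zero_of_mul (hc ▸ hd m hm)
    refine ⟨Pi.single m 1 + c • v, by simp [hm.symm, hv, hc0], ?_⟩
    rw [Matrix.add_vecMul, Matrix.smul_vecMul, hvL, single_vecMul_laplacian, smul_add, smul_smul c,
      smul_smul c, hc]
    module

theorem exists_vecMul_laplacian_eq_smul (hd : Function.Injective d) (hr : d r = 0) (m : V) :
    ∃ v : V → K, v r ≠ 0 ∧ v ᵥ* T.laplacian d = d m • v := by
  have hd0 : ∀ j, j ≠ r → d j ≠ 0 := fun j hj => hr ▸ hd.ne hj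
  have hdm : ∀ j, T.depth j < T.depth m → d j ≠ d m := fun j hj h => hj.ne (congrArg T.depth (hd h))
  simpa using T.exists_vecMul_laplacian_eq_smul_add_single hr hd0 (d m) m hdm

end SpanningArborescence

open Polynomial in
theorem stmt2_general {K : Type*} [Field K] {N : ℕ} {E : Finset (Fin N × Fin N)} {r : Fin N}
    (hspan : ∀ j : Fin N, Relation.ReflTransGen (fun a b => (a, b) ∈ E) r j)
    {d : Fin N → K} (hd : Function.Injective d) (hr : d r = 0) :
    ∃ w : Fin N × Fin N → K,
      IsCtrb (lapMat E w) (Matrix.of fun i (_ : Fin 1) => if i = r then (1 : K) else 0) ∧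
      (lapMat E w).charpoly = ∏ i, (X - C (d i)) := by
  obtain ⟨T⟩ := SpanningArborescence.nonempty_of_forall_reflTransGen hspan
  refine ⟨T.weight d, ?_⟩
  rw [T.lapMat_weight hr]
  choose v hvr hvL using T.exists_vecMul_laplacian_eq_smul hd hr
  have hv0 : ∀ k, v k ≠ 0 := fun k h => hvr k (congrFun h r)
  refine ⟨isCtrb_of_vecMul_eq_smul hd hvL fun k h => hvr k ?_,
    charpoly_eq_prod_X_sub_C_of_vecMul_eq_smul hd hv0 hvL⟩
  simpa [Matrix.vecMul, dotProduct] using congrFun h 0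

/-- Corollary 1 of the paper. If every vertex of a digraph without self-loops
is reachable from vertex `1`, then there is a weight vector `w` such that `(L(w), e₁)` is
controllable while `L(w)` has `N` distinct complex eigenvalues. -/
theorem stmt2 {N : ℕ} (hN : 0 < N) (E : Finset (Fin N × Fin N)) (hE : ∀ e ∈ E, e.1 ≠ e.2)
    (hspan : ∀ j : Fin N, Relation.ReflTransGen (fun a b => (a, b) ∈ E) (⟨0, hN⟩ : Fin N) j) :
    ∃ w : Fin N × Fin N → ℝ,
      IsCtrb (lapMat E w)
        (Matrix.of fun i (_ : Fin 1) => if i = (⟨0, hN⟩ : Fin N) then (1 : ℝ) else 0) ∧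
      (((lapMat E w).map (fun a => (a : ℂ))).charpoly.roots.toFinset.card = N) := by
  have hd : Function.Injective fun i : Fin N => ((i : ℕ) : ℝ) :=
    Nat.cast_injective.comp Fin.val_injective
  obtain ⟨w, hctrb, hchar⟩ := stmt2_general hspan hd Nat.cast_zero
  exact ⟨w, hctrb, (card_toFinset_roots_charpoly_map Complex.ofRealHom hd hchar).trans
    (Fintype.card_fin N)⟩
end
end

section
/- Let A ∈ ℝ^{n×n}, B ∈ ℝ^{n×r}, C ∈ ℝ^{r×n}, and let G_sys = ({1,…,N}, E) be a digraph without self-loops that has a spanning tree, i.e., there is a vertex from which every vertex of {1,…,N} is reachable by a directed path. Let d₀ be the maximal degree of a polynomial α₀ ∈ ℝ[s] that divides det(sI_n − A + t·BC) in the polynomial ring ℝ[t][s] (t a single indeterminate). Let p = (p_e)_{e∈E} be algebraically independent indeterminates, let L(p) be the generic Laplacian with entries in ℝ[p], and let A_sys(p) = I_N ⊗ A − L(p) ⊗ (BC). Then the maximal degree of a polynomial α ∈ ℝ[s] that divides det(sI_{nN} − A_sys(p)) in ℝ[p][s] equals n + (N−1)·d₀. Equivalently, exactly (N−1)·(n −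 d₀) of the modes of A_sys(p) are parameter-dependent (counting multiplicities). -/
open Matrix
open scoped Kronecker

noncomputable section

/-!
Write `det (sI - A + tQ) = α₀(s) g(s, t)` with `α₀` of maximal degree, so that `g`, as a polynomial
in `t`, is primitive. Because the Kronecker blocks of `sI - A_sys` are polynomials in `L`, the
characteristic polynomial of `A_sys` is the determinant of `det (sI - A + tQ)` evaluated at `t = L`,
that is `α₀(s) ^ N * det (g(s, L))`. Since `L` kills the all-ones vector, this is an eigenvector of
`g(s, L)` with eigenvalue `g(s, 0)`, so `α₀ ^ N * g(s, 0) = det (sI - A) * α₀ ^ (N - 1)` is a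
divisor. Conversely, giving the edges of a spanning tree the weight `t` and all others the weight
`0` makes `L` triangular with diagonal `0, t, …, t`, and the characteristic polynomial specialises
to `det (sI - A) * α₀ ^ (N - 1) * g ^ (N - 1)`; as `g` is primitive, a polynomial in `s` alone can
only divide the first two factors.
-/

section FixedDegrees
open Polynomial
variable {K R : Type*} [CommRing K] [CommRing R]

/-- The degrees of the nonzero polynomials over the coefficient ring `K` that divide the polynomial
`P` over the parameter ring `R`; when `P` is the characteristic polynomial of a parametrised
matrix, the largest of them is the number of its parameter-independent modes. -/
def fixedDegrees (φ : K →+* R) (P : R[X]) : Set ℕ :=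
  {d | ∃ α : K[X], α ≠ 0 ∧ α.natDegree = d ∧ α.map φ ∣ P}

theorem isGreatest_fixedDegrees_of_dvd_iff [IsDomain K] {φ : K →+* R} {P : R[X]} {β : K[X]}
    (hβ : β ≠ 0) (h : ∀ α : K[X], α.map φ ∣ P ↔ α ∣ β) :
    IsGreatest (fixedDegrees φ P) β.natDegree := by
  refine ⟨⟨β, hβ, rfl, (h β).2 dvd_rfl⟩, ?_⟩
  rintro _ ⟨α, -, rfl, hα⟩
  exact natDegree_le_of_dvd ((h α).1 hα) hβ

theorem C_dvd_swap_iff {α : K[X]} {P : K[X][X]} : C α ∣ Bivariate.swap P ↔ α.map C ∣ P := by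
  rw [← Bivariate.swap_map_C, map_dvd_iff]

theorem exists_isPrimitive_of_isGreatest_fixedDegrees [IsDomain K] {P : K[X][X]} (hP : P.Monic)
    {d : ℕ} (hd : IsGreatest (fixedDegrees C P) d) :
    ∃ α₀ : K[X], α₀ ≠ 0 ∧ α₀.natDegree = d ∧
      ∃ g : K[X][X], g.IsPrimitive ∧ Bivariate.swap P = C α₀ * g := by
  obtain ⟨⟨α₀, hα₀, hdeg, hdvd⟩, hmax⟩ := hd
  obtain ⟨g, hg⟩ := C_dvd_swap_iff.2 hdvd
  refine ⟨α₀, hα₀, hdeg, g, fun β ⟨q, hq⟩ => ?_, hg⟩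
  have hβα₀ : (α₀ * β).map C ∣ P := C_dvd_swap_iff.1 ⟨q, by rw [hg, hq, C_mul, mul_assoc]⟩
  have hβP : β.map C ∣ P := (Polynomial.map_dvd C (dvd_mul_left β α₀)).trans hβα₀
  have hβ : β ≠ 0 := by
    rintro rfl
    exact hP.ne_zero (by simpa using hβP)
  have hβdeg : β.natDegree = 0 := by
    have := hmax ⟨α₀ * β, mul_ne_zero hα₀ hβ, rfl, hβα₀⟩
    rw [natDegree_mul hα₀ hβ] at this
    omega
  have hlead : IsUnit (C β.leadingCoeff) := by
    simpa [leadingCoeff_map_of_injective C_injective] using hP.isUnit_leadingCoeff_of_dvd hβP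
  rwa [eq_C_of_natDegree_eq_zero hβdeg, ← hβdeg]

end FixedDegrees

section Primitive
open Polynomial
variable {R : Type*} [CommRing R] [IsDomain R]

theorem isRelPrime_C_of_isPrimitive {a : R} (ha : a ≠ 0) {q : R[X]} (hq : q.IsPrimitive) :
    IsRelPrime (C a) q := by
  intro d hda hdq
  have hd : d = C (d.coeff 0) := by
    refine eq_C_of_natDegree_eq_zero (Nat.le_zero.1 ?_)
    simpa using natDegree_le_of_dvd hda (C_ne_zero.2 ha)
  rw [hd] at hdq ⊢
  exact isUnit_C.2 (hq _ hdq)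

theorem dvd_of_C_dvd_C_mul_pow [UniqueFactorizationMonoid R] {a b : R} {q : R[X]}
    (hq : q.IsPrimitive) {k : ℕ} (h : C a ∣ C b * q ^ k) : a ∣ b := by
  rcases eq_or_ne a 0 with rfl | ha
  · simpa [hq.ne_zero] using h
  · have hC : C a ∣ C b := (isRelPrime_C_of_isPrimitive ha hq).pow_right.dvd_of_dvd_mul_right h
    simpa using (C_dvd_iff_dvd_coeff a (C b)).1 hC 0

end Primitive

section MatrixPolynomial
open Polynomial
variable {R ι : Type*} [CommRing R] [Fintype ι]

theorem mul_apply_self_of_blockTriangular {β : Type*} [LinearOrder β] {b : ι → β}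
    {M N : Matrix ι ι R} (hb : b.Injective) (hM : M.BlockTriangular b)
    (hN : N.BlockTriangular b) (i : ι) : (M * N) i i = M i i * N i i := by
  rw [Matrix.mul_apply]
  refine Finset.sum_eq_single i (fun j _ hj => ?_) (by simp)
  rcases (hb.ne hj).lt_or_gt with hji | hij
  · rw [hM hji, zero_mul]
  · rw [hN hij, mul_zero]

variable [DecidableEq ι]

theorem aeval_mulVec_of_mulVec_eq_smul {M : Matrix ι ι R} {v : ι → R} {μ : R}
    (h : M *ᵥ v = μ • v) (p : R[X]) : aeval M p *ᵥ v = p.eval μ • v := by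
  have := Module.End.aeval_apply_of_mem_apply_eq_smul (f := Matrix.toLinAlgEquiv' M) (p := p) h
  rwa [aeval_algHom_apply] at this

theorem dvd_det_of_mulVec_eq_smul {M : Matrix ι ι R} {v : ι → R} {μ : R} (h : M *ᵥ v = μ • v)
    {i : ι} (hi : IsUnit (v i)) : μ ∣ M.det := by
  refine hi.dvd_mul_right.1 ⟨(M.adjugate *ᵥ v) i, ?_⟩
  have := congrFun (congrArg (M.adjugate *ᵥ ·) h) i
  simpa [Matrix.mulVec_mulVec, Matrix.adjugate_mul, Matrix.smul_mulVec, Matrix.mulVec_smul]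
    using this

variable {β : Type*} [LinearOrder β] {b : ι → β} {M : Matrix ι ι R}

theorem blockTriangular_aeval (hM : M.BlockTriangular b) (p : R[X]) :
    (aeval M p).BlockTriangular b :=
  Algebra.adjoin_le (S := Matrix.blockTriangularSubalgebra R R b) (Set.singleton_subset_iff.2 hM)
    (aeval_mem_adjoin_singleton R M)

theorem aeval_apply_self_of_blockTriangular (hb : b.Injective) (hM : M.BlockTriangular b)
    (p : R[X]) (i : ι) : aeval M p i i = p.eval (M i i) := by
  induction p using Polynomial.induction_on with
  | C a => simp [Matrix.algebraMap_matrix_apply]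
  | add p q hp hq => simp [hp, hq]
  | monomial n a h =>
    rw [pow_succ, ← mul_assoc, map_mul, aeval_X,
      mul_apply_self_of_blockTriangular hb (blockTriangular_aeval hM _) hM, h, eval_mul_X]

theorem det_of_blockTriangular_of_injective (hb : b.Injective) (hM : M.BlockTriangular b) :
    M.det = ∏ i, M i i := by
  rw [hM.det, Finset.prod_image hb.injOn]
  refine Finset.prod_congr rfl fun i _ => ?_
  let : Unique {j // b j = b i} := ⟨⟨⟨i, rfl⟩⟩, fun j => Subtype.ext (hb j.2)⟩
  exact Matrix.det_unique _

theorem det_aeval_of_blockTriangular (hb : b.Injective) (hM : M.BlockTriangular b) (p : R[X]) :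
    (aeval M p).det = ∏ i, p.eval (M i i) := by
  simp only [det_of_blockTriangular_of_injective hb (blockTriangular_aeval hM p),
    aeval_apply_self_of_blockTriangular hb hM]

end MatrixPolynomial

section Network
open Polynomial
variable {R ι κ : Type*} [CommRing R] [DecidableEq ι]

/-- The system matrix `A_sys = I ⊗ A - L ⊗ Q` of identical systems coupled through `L`. -/
def networkMatrix (A Q : Matrix κ κ R) (L : Matrix ι ι R) :
    Matrix (ι × κ) (ι × κ) R :=
  (1 : Matrix ι ι R) ⊗ₖ A - L ⊗ₖ Q

theorem networkMatrix_map {S : Type*} [CommRing S] (φ : R →+* S) (A Q : Matrix κ κ R)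
    (L : Matrix ι ι R) :
    (networkMatrix A Q L).map φ = networkMatrix (A.map φ) (Q.map φ) (L.map φ) := by
  ext
  simp [networkMatrix, Matrix.one_apply, apply_ite]

variable [Fintype κ] [DecidableEq κ]

/-- `det (sI - A + tQ)` as a polynomial in `t` with coefficients in `R[s]`, so that a matrix can be
substituted for `t`. -/
def pencilPolynomial (A Q : Matrix κ κ R) : R[X][X] :=
  (A.charmatrix.map C + (X : R[X][X]) • Q.map fun q => C (C q)).det

theorem swap_charpoly_sub_X_smul (A Q : Matrix κ κ R) :
    Bivariate.swap (A.map C - (X : R[X]) • Q.map C).charpoly = pencilPolynomial A Q := by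
  rw [Matrix.charpoly, pencilPolynomial, AlgEquiv.map_det]
  congr 1
  ext1 i j
  by_cases h : i = j <;>
    simp [h, Bivariate.swap_X, Bivariate.swap_Y, Bivariate.swap_C_C, mul_comm X, sub_eq_neg_add,
      add_right_comm]

theorem eval_C_pencilPolynomial (A Q : Matrix κ κ R) (μ : R) :
    (pencilPolynomial A Q).eval (C μ) = (A - μ • Q).charpoly := by
  rw [Matrix.charpoly, pencilPolynomial, ← coe_evalRingHom, RingHom.map_det]
  congr 1
  ext1 i j
  by_cases h : i = j <;> simp [h, mul_comm (C μ), sub_eq_neg_add, add_right_comm]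

theorem map_pencilPolynomial {S : Type*} [CommRing S] (φ : R →+* S) (A Q : Matrix κ κ R) :
    (pencilPolynomial A Q).map (mapRingHom φ) = pencilPolynomial (A.map φ) (Q.map φ) := by
  rw [pencilPolynomial, pencilPolynomial, ← coe_mapRingHom, RingHom.map_det]
  congr 1
  ext1 i j
  by_cases h : i = j <;> simp [h]

variable [Fintype ι]

theorem charpoly_networkMatrix (A Q : Matrix κ κ R) (L : Matrix ι ι R) :
    (networkMatrix A Q L).charpoly = (aeval (L.map C) (pencilPolynomial A Q)).det := by
  rw [Matrix.charpoly, pencilPolynomial, ← AlgHom.coe_toRingHom, Matrix.det_det,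
    ← Matrix.det_reindex_self (Equiv.prodComm ι κ)]
  congr 1
  ext1 ⟨k, i⟩ ⟨l, j⟩
  by_cases hk : k = l <;> by_cases hi : i = j <;>
    simp [networkMatrix, hk, hi, Matrix.algebraMap_matrix_apply, ← Algebra.smul_def,
      mul_comm (C (L _ _)), sub_eq_neg_add, add_right_comm]

theorem charpoly_networkMatrix_of_blockTriangular {β : Type*} [LinearOrder β] {b : ι → β}
    (hb : b.Injective) {L : Matrix ι ι R} (hL : L.BlockTriangular b) (A Q : Matrix κ κ R) :
    (networkMatrix A Q L).charpoly = ∏ i, (A - L i i • Q).charpoly := by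
  simp only [charpoly_networkMatrix, det_aeval_of_blockTriangular hb (hL.map C), Matrix.map_apply,
    eval_C_pencilPolynomial]

theorem charpoly_mul_pow_dvd_charpoly_networkMatrix {A Q : Matrix κ κ R} {L : Matrix ι ι R}
    {v : ι → R} {μ : R} (hv : L *ᵥ v = μ • v) {i : ι} (hi : IsUnit (v i)) {α : R[X]}
    (hα : C α ∣ pencilPolynomial A Q) :
    (A - μ • Q).charpoly * α ^ (Fintype.card ι - 1) ∣ (networkMatrix A Q L).charpoly := by
  obtain ⟨g, hg⟩ := hα
  have hvC : L.map C *ᵥ (C ∘ v) = C μ • (C ∘ v) := by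
    ext1 j
    simpa [RingHom.map_mulVec] using congrArg C (congrFun hv j)
  have hdet : g.eval (C μ) ∣ (aeval (L.map C) g).det :=
    dvd_det_of_mulVec_eq_smul (aeval_mulVec_of_mulVec_eq_smul hvC g) (i := i) (hi.map C)
  have hcard : Fintype.card ι = 1 + (Fintype.card ι - 1) := by
    have := Fintype.card_pos_iff.2 ⟨i⟩
    omega
  calc (A - μ • Q).charpoly * α ^ (Fintype.card ι - 1)
      = α ^ Fintype.card ι * g.eval (C μ) := by
        rw [← eval_C_pencilPolynomial, hg, eval_mul, eval_C, hcard, pow_add, pow_one,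
          Nat.add_sub_cancel_left]
        ring
    _ ∣ α ^ Fintype.card ι * (aeval (L.map C) g).det := mul_dvd_mul_left _ hdet
    _ = (networkMatrix A Q L).charpoly := by
        rw [charpoly_networkMatrix, hg, map_mul, aeval_C, ← Algebra.smul_def, Matrix.det_smul]

end Network

theorem exists_parent_of_forall_reflTransGen {V : Type*} {r : V → V → Prop} {root : V}
    (h : ∀ v, Relation.ReflTransGen r root v) :
    ∃ (parent : V → V) (height : V → ℕ),
      ∀ v, v ≠ root → r (parent v) v ∧ height (parent v) < height v := by
  let : Quiver V := ⟨fun a b => PLift (r a b)⟩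
  have : Quiver.RootedConnected root := ⟨fun v => by
    induction h v with
    | refl => exact ⟨.nil⟩
    | tail _ hr ih => exact ih.map fun p => p.cons ⟨hr⟩⟩
  have hparent (v : V) : ∃ u, v ≠ root → r u v ∧
      (Quiver.shortestPath root u).length < (Quiver.shortestPath root v).length := by
    rcases Quiver.shortestPath root v with _ | ⟨p, e⟩
    · exact ⟨root, fun hv => (hv rfl).elim⟩
    · exact ⟨_, fun _ => ⟨e.down, Nat.lt_succ_of_le (Quiver.shortest_path_spec root p)⟩⟩
  choose parent hparent using hparent
  exact ⟨parent, fun v => (Quiver.shortestPath root v).length, hparent⟩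

section Laplacian
variable {R : Type*} [CommRing R] {N : ℕ} {E : Finset (Fin N × Fin N)}

theorem lapMat_mulVec_one (w : Fin N × Fin N → R) : lapMat E w *ᵥ 1 = 0 := by
  ext i
  have hentry (j : Fin N) : lapMat E w i j =
      (if i = j then ∑ k with k ≠ i ∧ (k, i) ∈ E, w (k, i) else 0) -
        if j ≠ i ∧ (j, i) ∈ E then w (j, i) else 0 := by
    by_cases hij : i = j
    · simp [lapMat, hij]
    · by_cases hE : (j, i) ∈ E <;> simp [lapMat, hij, Ne.symm hij, hE]
  rw [Matrix.mulVec, dotProduct_one]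
  simp [hentry, Finset.sum_sub_distrib, Finset.sum_filter]

theorem map_lapMat {S : Type*} [CommRing S] (f : R →+* S) (w : Fin N × Fin N → R) :
    (lapMat E w).map f = lapMat E (f ∘ w) := by
  ext i j
  simp only [lapMat, Matrix.of_apply, Matrix.map_apply]
  split_ifs <;> simp

theorem lapMat_congr {w w' : Fin N × Fin N → R} (h : ∀ e ∈ E, w e = w' e) :
    lapMat E w = lapMat E w' := by
  ext i j
  simp only [lapMat, Matrix.of_apply]
  split_ifs with _ hji
  · exact Finset.sum_congr rfl fun k hk => h _ (Finset.mem_filter.1 hk).2.2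
  · rw [h _ hji]
  · rfl

/-- The weights equal to `c` on the edges `(parent v, v)` of a spanning tree, and zero elsewhere. -/
def treeWeight (root : Fin N) (parent : Fin N → Fin N) (c : R) (e : Fin N × Fin N) : R :=
  if e.2 ≠ root ∧ e.1 = parent e.2 then c else 0

theorem lapMat_treeWeight_apply_self {root : Fin N} {parent : Fin N → Fin N}
    (hE : ∀ v, v ≠ root → (parent v, v) ∈ E) (hne : ∀ v, v ≠ root → parent v ≠ v) (c : R)
    (v : Fin N) : lapMat E (treeWeight root parent c) v v = if v = root then 0 else c := by
  by_cases hv : v = root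
  · simp [lapMat, treeWeight, hv]
  · rw [lapMat, Matrix.of_apply, if_pos rfl, Finset.sum_eq_single_of_mem (parent v)]
    · simp [treeWeight, hv]
    · simp [hE v hv, hne v hv]
    · intro u _ hu
      simp [treeWeight, hu]

/-- Orders the vertices from the leaves of a rooted tree to its root, breaking ties by index. -/
def leavesFirst (height : Fin N → ℕ) (v : Fin N) : ℕᵒᵈ ×ₗ Fin N :=
  toLex (OrderDual.toDual (height v), v)

theorem leavesFirst_injective (height : Fin N → ℕ) : (leavesFirst height).Injective :=
  fun _ _ h => congrArg Prod.snd (toLex.injective h)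

theorem lapMat_treeWeight_blockTriangular {root : Fin N} {parent : Fin N → Fin N}
    {height : Fin N → ℕ} (hheight : ∀ v, v ≠ root → height (parent v) < height v) (c : R) :
    (lapMat E (treeWeight root parent c)).BlockTriangular (leavesFirst height) := by
  intro v u huv
  have hne : v ≠ u := by
    rintro rfl
    exact lt_irrefl _ huv
  have hparent : ¬(v ≠ root ∧ u = parent v) := by
    rintro ⟨hv, rfl⟩
    exact huv.not_gt (Prod.Lex.toLex_lt_toLex.2 (Or.inl (hheight v hv)))
  simp [lapMat, treeWeight, hne, hparent]

theorem exists_lapMat_charpoly_networkMatrix_eq {κ : Type*} [Fintype κ] [DecidableEq κ]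
    (hspan : ∃ root, ∀ v, Relation.ReflTransGen (fun a b => (a, b) ∈ E) root v)
    (A Q : Matrix κ κ R) (c : R) :
    ∃ w : Fin N × Fin N → R, (networkMatrix A Q (lapMat E w)).charpoly =
      A.charpoly * (A - c • Q).charpoly ^ (N - 1) := by
  obtain ⟨root, hroot⟩ := hspan
  obtain ⟨parent, height, htree⟩ := exists_parent_of_forall_reflTransGen hroot
  have hdiag := lapMat_treeWeight_apply_self (fun v hv => (htree v hv).1)
    (fun v hv h => (htree v hv).2.ne (congrArg height h)) c
  refine ⟨treeWeight root parent c, ?_⟩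
  rw [charpoly_networkMatrix_of_blockTriangular (leavesFirst_injective height)
      (lapMat_treeWeight_blockTriangular (fun v hv => (htree v hv).2) c),
    ← Finset.mul_prod_erase _ _ (Finset.mem_univ root), hdiag, if_pos rfl, zero_smul, sub_zero]
  congr 1
  rw [Finset.prod_eq_pow_card fun v hv => by rw [hdiag, if_neg (Finset.ne_of_mem_erase hv)],
    Finset.card_erase_of_mem (Finset.mem_univ root), Finset.card_univ, Fintype.card_fin]

variable (R E) in
/-- The generic Laplacian `L(p)` of the digraph with edge set `E`, with one indeterminate for each
edge. -/
def genericLaplacian : Matrix (Fin N) (Fin N) (MvPolynomial E R) :=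
  lapMat E fun e => if h : e ∈ E then MvPolynomial.X ⟨e, h⟩ else 0

theorem genericLaplacian_map_eval₂Hom {S : Type*} [CommRing S] (f : R →+* S)
    (w : Fin N × Fin N → S) :
    (genericLaplacian R E).map (MvPolynomial.eval₂Hom f fun e : E => w e) = lapMat E w := by
  rw [genericLaplacian, map_lapMat]
  exact lapMat_congr fun e he => by simp [he]

end Laplacian

section GenericNetwork
open Polynomial
variable {K κ : Type*} [CommRing K] [Fintype κ] [DecidableEq κ] {N : ℕ}
  {E : Finset (Fin N × Fin N)} {A Q : Matrix κ κ K} {α : K[X]}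

theorem charpoly_mul_pow_dvd_charpoly_genericNetwork [Nonempty (Fin N)]
    (hα : C α ∣ pencilPolynomial A Q) :
    (A.charpoly * α ^ (N - 1)).map MvPolynomial.C ∣
      (networkMatrix (A.map MvPolynomial.C) (Q.map MvPolynomial.C)
        (genericLaplacian K E)).charpoly := by
  have hαmap : C (α.map MvPolynomial.C) ∣
      pencilPolynomial (A.map (MvPolynomial.C (σ := E))) (Q.map MvPolynomial.C) := by
    rw [← map_pencilPolynomial]
    simpa using Polynomial.map_dvd (mapRingHom MvPolynomial.C) hα
  have hker : genericLaplacian K E *ᵥ 1 = (0 : MvPolynomial E K) • (1 : Fin N → _) := by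
    rw [zero_smul, genericLaplacian, lapMat_mulVec_one]
  simpa [Matrix.charpoly_map] using charpoly_mul_pow_dvd_charpoly_networkMatrix hker
    (i := Classical.arbitrary (Fin N)) isUnit_one hαmap

theorem C_dvd_of_dvd_charpoly_genericNetwork
    (hspan : ∃ root, ∀ v, Relation.ReflTransGen (fun a b => (a, b) ∈ E) root v)
    (hα : α.map MvPolynomial.C ∣ (networkMatrix (A.map MvPolynomial.C) (Q.map MvPolynomial.C)
      (genericLaplacian K E)).charpoly) :
    C α ∣ C A.charpoly * pencilPolynomial A Q ^ (N - 1) := by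
  obtain ⟨w, hw⟩ := exists_lapMat_charpoly_networkMatrix_eq hspan (A.map C) (Q.map C) (X : K[X])
  let specialize : MvPolynomial E K →+* K[X] := MvPolynomial.eval₂Hom C fun e : E => w e
  have hconst : specialize.comp MvPolynomial.C = C := RingHom.ext fun a => by simp [specialize]
  have hmap (M : Matrix κ κ K) : (M.map MvPolynomial.C).map specialize = M.map C := by
    rw [Matrix.map_map, ← RingHom.coe_comp, hconst]
  have h := Polynomial.map_dvd specialize hα
  rw [Polynomial.map_map, hconst, ← Matrix.charpoly_map, networkMatrix_map, hmap, hmap,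
    genericLaplacian_map_eval₂Hom, hw, ← C_dvd_swap_iff, map_mul, map_pow,
    swap_charpoly_sub_X_smul, Matrix.charpoly_map, Bivariate.swap_map_C] at h
  exact h

end GenericNetwork

section Main
open Polynomial

theorem stmt9_general {K κ : Type*} [CommRing K] [IsDomain K] [UniqueFactorizationMonoid K]
    [Fintype κ] [DecidableEq κ] {N : ℕ} (A Q : Matrix κ κ K) (E : Finset (Fin N × Fin N))
    (hspan : ∃ root, ∀ v, Relation.ReflTransGen (fun a b => (a, b) ∈ E) root v) (d₀ : ℕ)
    (hd₀ : IsGreatest (fixedDegrees C (A.map C - (X : K[X]) • Q.map C).charpoly) d₀) :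
    IsGreatest
      (fixedDegrees MvPolynomial.C (networkMatrix (A.map MvPolynomial.C) (Q.map MvPolynomial.C)
        (genericLaplacian K E)).charpoly)
      (Fintype.card κ + (N - 1) * d₀) := by
  obtain ⟨α₀, hα₀, rfl, g, hg, hpencil⟩ :=
    exists_isPrimitive_of_isGreatest_fixedDegrees (Matrix.charpoly_monic _) hd₀
  rw [swap_charpoly_sub_X_smul] at hpencil
  have : Nonempty (Fin N) := hspan.nonempty
  have hA := A.charpoly_monic.ne_zero
  have hpow := pow_ne_zero (N - 1) hα₀
  have hdegree : (A.charpoly * α₀ ^ (N - 1)).natDegree =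
      Fintype.card κ + (N - 1) * α₀.natDegree := by
    rw [natDegree_mul hA hpow, natDegree_pow, A.charpoly_natDegree_eq_dim]
  rw [← hdegree]
  refine isGreatest_fixedDegrees_of_dvd_iff (mul_ne_zero hA hpow)
    fun α => ⟨fun hα => ?_, fun hα => ?_⟩
  · refine dvd_of_C_dvd_C_mul_pow hg (k := N - 1) ?_
    simpa [hpencil, mul_pow, mul_assoc] using C_dvd_of_dvd_charpoly_genericNetwork hspan hα
  · exact (Polynomial.map_dvd _ hα).trans
      (charpoly_mul_pow_dvd_charpoly_genericNetwork (hpencil ▸ dvd_mul_right _ _))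

end Main

open Polynomial in
/-- Lemma 5 of the paper. Suppose `G_sys` has a spanning tree, and let `d₀` be
the maximal degree of a real polynomial `α₀(s)` dividing `det(sI - A + t·BC)` in `ℝ[t][s]`.
Then the maximal degree of a real polynomial `α(s)` dividing `det(sI - A_sys(p))` in `ℝ[p][s]`
(where `p` is a family of independent indeterminates, one per edge, and
`A_sys(p) = I_N ⊗ A - L(p) ⊗ BC`) equals `n + (N - 1)·d₀`. -/
theorem stmt9 {n r N : ℕ}
    (A : Matrix (Fin n) (Fin n) ℝ) (B : Matrix (Fin n) (Fin r) ℝ) (C : Matrix (Fin r) (Fin n) ℝ)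
    (E : Finset (Fin N × Fin N)) (hE : ∀ e ∈ E, e.1 ≠ e.2)
    (hspan : ∃ i0 : Fin N, ∀ j : Fin N, Relation.ReflTransGen (fun a b => (a, b) ∈ E) i0 j)
    (d0 : ℕ)
    (hd0 : IsGreatest
      {d : ℕ | ∃ α : Polynomial ℝ, α ≠ 0 ∧ α.natDegree = d ∧
        Polynomial.map (Polynomial.C : ℝ →+* Polynomial ℝ) α ∣
          Matrix.charpoly
            ((A.map fun a => Polynomial.C a)
              - (Polynomial.X : Polynomial ℝ) • ((B * C).map fun a => Polynomial.C a))} d0) :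
    IsGreatest
      {d : ℕ | ∃ α : Polynomial ℝ, α ≠ 0 ∧ α.natDegree = d ∧
        Polynomial.map (MvPolynomial.C : ℝ →+* MvPolynomial (↥E) ℝ) α ∣
          Matrix.charpoly
            ((1 : Matrix (Fin N) (Fin N) (MvPolynomial (↥E) ℝ)) ⊗ₖ (A.map fun a => MvPolynomial.C a)
              - lapMat E (fun e => if h : e ∈ E then MvPolynomial.X (⟨e, h⟩ : ↥E) else 0)
                  ⊗ₖ ((B * C).map fun a => MvPolynomial.C a))}
      (n + (N - 1) * d0) := by
  have h := stmt9_general A (B * C) E hspan d0 hd0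
  rwa [Fintype.card_fin] at h
end
end

section
/- Consider a differently weighted MIMO networked relative coupling system with A ∈ ℝ^{n×n}, B = [b₁,…,b_r] ∈ ℝ^{n×r}, C ∈ ℝ^{r×n} with rows c₁,…,c_r, digraph G_sys on {1,…,N} without self-loops, and driving set I_u. If there exist weight vectors w^{(1)},…,w^{(r)} ∈ ℝ^{|E|} such that (A_sys(w^{(1)},…,w^{(r)}), B_sys) is controllable, then the set of tuples (w^{(1)},…,w^{(r)}) ∈ ℝ^{r·|E|} for which (A_sys(w^{(1)},…,w^{(r)}), B_sys) is not controllable has Lebesgue measure zero. In other words, structural controllability implies that the corresponding numerical systems are controllable for almost all values of the interaction weights. -/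
open Matrix
open scoped Kronecker

noncomputable section

/-- The rank-one matrix `b_k c_k` formed by the `k`-th column of `B` and the `k`-th row of `C`. -/
def colRow {n r : ℕ} (B : Matrix (Fin n) (Fin r) ℝ) (C : Matrix (Fin r) (Fin n) ℝ) (k : Fin r) :
    Matrix (Fin n) (Fin n) ℝ :=
  Matrix.of fun i j => B i k * C k j

/-- Lumped state matrix of the differently weighted MIMO NRCS:
`A_sys = I_N ⊗ A - ∑ₖ L(w⁽ᵏ⁾) ⊗ (b_k c_k)`. -/
def asysD {n r N : ℕ} (A : Matrix (Fin n) (Fin n) ℝ) (B : Matrix (Fin n) (Fin r) ℝ)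
    (C : Matrix (Fin r) (Fin n) ℝ) (E : Finset (Fin N × Fin N))
    (ws : Fin r → Fin N × Fin N → ℝ) : Matrix (Fin N × Fin n) (Fin N × Fin n) ℝ :=
  (1 : Matrix (Fin N) (Fin N) ℝ) ⊗ₖ A - ∑ k : Fin r, lapMat E (ws k) ⊗ₖ colRow B C k

/-- Extend a tuple of edge weights, indexed by `Fin r × ↥E` (i.e. a point of `ℝ^{r·|E|}`),
to `r` weight functions on all vertex pairs, vanishing off `E`. -/
def extW {N r : ℕ} (E : Finset (Fin N × Fin N)) (ws : Fin r × ↥E → ℝ) (k : Fin r) :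
    Fin N × Fin N → ℝ :=
  fun e => if h : e ∈ E then ws (k, ⟨e, h⟩) else 0

/-!
By the Gram determinant criterion, controllability of `(M, Q)` is the non-vanishing of
`det (K Kᵀ)`, where `K` is the Kalman matrix. The entries of the lumped matrices are analytic in
the weights, hence so is this determinant. On every line `t ↦ x₀ + t v` through a point `x₀` where
it is nonzero, it vanishes only for a discrete set of `t`. By Fubini some single `t ≠ 0` is such
that `x₀ + t v` is a zero for almost no `v`, and the affine map `v ↦ x₀ + t v` preserves null sets.
-/

section RadialFubini

open MeasureTheory

variable {V : Type*} [NormedAddCommGroup V] [NormedSpace ℝ V] [FiniteDimensional ℝ V]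
  [MeasurableSpace V] [BorelSpace V]

theorem ae_comp_add_smul_iff (μ : Measure V) [μ.IsAddHaarMeasure] {p : V → Prop} (x₀ : V) {t : ℝ}
    (ht : t ≠ 0) : (∀ᵐ v ∂μ, p (x₀ + t • v)) ↔ ∀ᵐ v ∂μ, p v := by
  change μ ((t • ·) ⁻¹' ((x₀ + ·) ⁻¹' {v | ¬ p v})) = 0 ↔ μ {v | ¬ p v} = 0
  rw [Measure.addHaar_preimage_smul μ ht, measure_preimage_add]
  simp [ht]

theorem ae_of_forall_ae_add_smul (μ : Measure V) [μ.IsAddHaarMeasure] {p : V → Prop}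
    (hp : MeasurableSet {v | p v}) (x₀ : V) (h : ∀ v, ∀ᵐ t : ℝ, p (x₀ + t • v)) :
    ∀ᵐ v ∂μ, p v := by
  have hmeas : MeasurableSet {q : V × ℝ | p (x₀ + q.2 • q.1)} :=
    hp.preimage (f := fun q : V × ℝ => x₀ + q.2 • q.1) (by fun_prop)
  have hswap : ∀ᵐ t : ℝ, ∀ᵐ v ∂μ, p (x₀ + t • v) :=
    (Measure.ae_ae_comm hmeas).1 (.of_forall h)
  obtain ⟨t, ht, ht₀⟩ := (hswap.and (Measure.ae_ne volume 0)).exists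
  exact (ae_comp_add_smul_iff μ x₀ ht₀).1 ht

variable {F : Type*} [NormedAddCommGroup F] [NormedSpace ℝ F]

theorem ae_ne_zero_of_analyticAt_real {f : ℝ → F} (hf : ∀ t, AnalyticAt ℝ f t) {t₀ : ℝ}
    (ht₀ : f t₀ ≠ 0) : ∀ᵐ t, f t ≠ 0 := by
  have hcod : f ⁻¹' {0}ᶜ ∈ Filter.codiscrete ℝ :=
    AnalyticOnNhd.preimage_zero_mem_codiscrete (fun t _ => hf t) ht₀
  have hae : ∀ᵐ t ∂volume.restrict Set.univ, f t ≠ 0 :=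
    ae_restrict_le_codiscreteWithin MeasurableSet.univ hcod
  simpa only [Measure.restrict_univ] using hae

theorem ae_ne_zero_of_analyticAt (μ : Measure V) [μ.IsAddHaarMeasure] {f : V → F}
    (hf : ∀ v, AnalyticAt ℝ f v) {v₀ : V} (hv₀ : f v₀ ≠ 0) : ∀ᵐ v ∂μ, f v ≠ 0 := by
  have hcont : Continuous f := continuous_iff_continuousAt.2 fun v => (hf v).continuousAt
  refine ae_of_forall_ae_add_smul μ (isOpen_ne_fun hcont continuous_const).measurableSet v₀
    fun v => ae_ne_zero_of_analyticAt_real (f := fun t : ℝ => f (v₀ + t • v)) (t₀ := 0)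
      (fun t => (hf _).comp_of_eq (f := fun t : ℝ => v₀ + t • v) (by fun_prop) rfl) ?_
  simpa only [zero_smul, add_zero] using hv₀

end RadialFubini

section Kalman

variable {ι κ : Type*} [Fintype ι] [Fintype κ] [DecidableEq ι]

theorem rank_eq_card_iff_det_ne_zero {K : Type*} [Field K] (M : Matrix ι ι K) :
    M.rank = Fintype.card ι ↔ M.det ≠ 0 := by
  rw [← isUnit_iff_ne_zero, ← Matrix.isUnit_iff_isUnit_det,
    ← Matrix.linearIndependent_rows_iff_isUnit, linearIndependent_iff_card_eq_finrank_span,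
    Matrix.rank_eq_finrank_span_row, eq_comm, Set.finrank]

theorem rank_eq_card_iff_det_mul_transpose_ne_zero {K : Type*} [Field K] [LinearOrder K]
    [IsStrictOrderedRing K] (M : Matrix ι κ K) :
    M.rank = Fintype.card ι ↔ (M * Mᵀ).det ≠ 0 := by
  rw [← Matrix.rank_self_mul_transpose, rank_eq_card_iff_det_ne_zero]

/-- The Kalman matrix `[Q, MQ, …, M^(d-1) Q]` of the pair `(M, Q)`, where `d` is the size of `M`;
its columns are indexed by the exponent together with a column of `Q`. -/
def kalmanMat {R : Type*} [Semiring R] (M : Matrix ι ι R) (Q : Matrix ι κ R) :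
    Matrix ι (Fin (Fintype.card ι) × κ) R :=
  Matrix.of fun i jk => (M ^ (jk.1 : ℕ) * Q) i jk.2

theorem isCtrb_iff_det_kalmanMat_mul_transpose_ne_zero {K : Type*} [Field K] [LinearOrder K]
    [IsStrictOrderedRing K] (M : Matrix ι ι K) (Q : Matrix ι κ K) :
    IsCtrb M Q ↔ (kalmanMat M Q * (kalmanMat M Q)ᵀ).det ≠ 0 :=
  rank_eq_card_iff_det_mul_transpose_ne_zero (kalmanMat M Q)

end Kalman

section AnalyticEntries

variable {𝕜 : Type*} [NontriviallyNormedField 𝕜] {V : Type*} [NormedAddCommGroup V]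
  [NormedSpace 𝕜 V] {ι κ τ : Type*} {x : V}

section NormedRing

variable {R : Type*} [NormedRing R] [NormedAlgebra 𝕜 R]

theorem analyticAt_matrix_mul_apply [Fintype κ] {M : V → Matrix ι κ R} {Q : V → Matrix κ τ R}
    (hM : ∀ i j, AnalyticAt 𝕜 (fun v => M v i j) x)
    (hQ : ∀ i j, AnalyticAt 𝕜 (fun v => Q v i j) x) (i : ι) (j : τ) :
    AnalyticAt 𝕜 (fun v => (M v * Q v) i j) x := by
  simp only [Matrix.mul_apply]
  fun_prop

theorem analyticAt_matrix_pow_apply [Fintype ι] [DecidableEq ι] {M : V → Matrix ι ι R}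
    (hM : ∀ i j, AnalyticAt 𝕜 (fun v => M v i j) x) (m : ℕ) (i j : ι) :
    AnalyticAt 𝕜 (fun v => (M v ^ m) i j) x := by
  induction m generalizing i j with
  | zero => simpa only [pow_zero] using analyticAt_const
  | succ m ih => simpa only [pow_succ] using analyticAt_matrix_mul_apply ih hM i j

theorem analyticAt_kalmanMat_apply [Fintype ι] [DecidableEq ι] {M : V → Matrix ι ι R}
    {Q : V → Matrix ι κ R} (hM : ∀ i j, AnalyticAt 𝕜 (fun v => M v i j) x)
    (hQ : ∀ i j, AnalyticAt 𝕜 (fun v => Q v i j) x) (i : ι) (jk : Fin (Fintype.card ι) × κ) :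
    AnalyticAt 𝕜 (fun v => kalmanMat (M v) (Q v) i jk) x :=
  analyticAt_matrix_mul_apply (analyticAt_matrix_pow_apply hM jk.1) hQ i jk.2

end NormedRing

variable {R : Type*} [NormedCommRing R] [NormedAlgebra 𝕜 R]

theorem analyticAt_matrix_det [Fintype ι] [DecidableEq ι] {M : V → Matrix ι ι R}
    (hM : ∀ i j, AnalyticAt 𝕜 (fun v => M v i j) x) :
    AnalyticAt 𝕜 (fun v => (M v).det) x := by
  simp only [Matrix.det_apply']
  fun_prop

theorem analyticAt_lapMat_apply {N : ℕ} (E : Finset (Fin N × Fin N)) {w : V → Fin N × Fin N → R}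
    (hw : ∀ e, AnalyticAt 𝕜 (fun v => w v e) x) (i j : Fin N) :
    AnalyticAt 𝕜 (fun v => lapMat E (w v) i j) x := by
  simp only [lapMat, Matrix.of_apply]
  split_ifs <;> fun_prop

end AnalyticEntries

theorem ae_isCtrb_of_analyticAt {V : Type*} [NormedAddCommGroup V] [NormedSpace ℝ V]
    [FiniteDimensional ℝ V] [MeasurableSpace V] [BorelSpace V] (μ : MeasureTheory.Measure V)
    [μ.IsAddHaarMeasure] {ι κ : Type*} [Fintype ι] [Fintype κ] [DecidableEq ι]
    {M : V → Matrix ι ι ℝ} {Q : V → Matrix ι κ ℝ}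
    (hM : ∀ x i j, AnalyticAt ℝ (fun v => M v i j) x)
    (hQ : ∀ x i j, AnalyticAt ℝ (fun v => Q v i j) x) (h : ∃ v, IsCtrb (M v) (Q v)) :
    ∀ᵐ v ∂μ, IsCtrb (M v) (Q v) := by
  simp only [isCtrb_iff_det_kalmanMat_mul_transpose_ne_zero] at h ⊢
  obtain ⟨v₀, hv₀⟩ := h
  have hK (x : V) := analyticAt_kalmanMat_apply (hM x) (hQ x)
  exact ae_ne_zero_of_analyticAt μ (fun x => analyticAt_matrix_det <|
    analyticAt_matrix_mul_apply (hK x) fun jk i => hK x i jk) hv₀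

theorem analyticAt_asysD_apply {V : Type*} [NormedAddCommGroup V] [NormedSpace ℝ V] {n r N : ℕ}
    (A : Matrix (Fin n) (Fin n) ℝ) (B : Matrix (Fin n) (Fin r) ℝ) (C : Matrix (Fin r) (Fin n) ℝ)
    (E : Finset (Fin N × Fin N)) {ws : V → Fin r → Fin N × Fin N → ℝ} {x : V}
    (hws : ∀ k e, AnalyticAt ℝ (fun v => ws v k e) x) (i j : Fin N × Fin n) :
    AnalyticAt ℝ (fun v => asysD A B C E (ws v) i j) x := by
  have hL (k : Fin r) := analyticAt_lapMat_apply E (hws k)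
  simp only [asysD, Matrix.sub_apply, Matrix.sum_apply, Matrix.kroneckerMap_apply]
  fun_prop

theorem analyticAt_extW_apply {N r : ℕ} (E : Finset (Fin N × Fin N)) (x : Fin r × ↥E → ℝ)
    (k : Fin r) (e : Fin N × Fin N) : AnalyticAt ℝ (fun ws => extW E ws k e) x := by
  unfold extW
  split_ifs with he
  · exact (ContinuousLinearMap.proj (R := ℝ) (k, ⟨e, he⟩)).analyticAt x
  · exact analyticAt_const

/-- If the differently weighted MIMO NRCS is structurally controllable, then
the set of weight tuples in `ℝ^{r·|E|}` rendering the lumped pair uncontrollable has Lebesgue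
measure zero. -/
theorem stmt11 {n r N : ℕ}
    (A : Matrix (Fin n) (Fin n) ℝ) (B : Matrix (Fin n) (Fin r) ℝ) (C : Matrix (Fin r) (Fin n) ℝ)
    (E : Finset (Fin N × Fin N)) (hE : ∀ e ∈ E, e.1 ≠ e.2)
    (Iu : Finset (Fin N))
    (h : ∃ ws : Fin r × ↥E → ℝ,
      IsCtrb (asysD A B C E (extW E ws)) ((deltaMat Iu : Matrix (Fin N) {i // i ∈ Iu} ℝ) ⊗ₖ B)) :
    MeasureTheory.volume
      {ws : Fin r × ↥E → ℝ |
        ¬ IsCtrb (asysD A B C E (extW E ws))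
            ((deltaMat Iu : Matrix (Fin N) {i // i ∈ Iu} ℝ) ⊗ₖ B)} = 0 := by
  have hA (x : Fin r × ↥E → ℝ) :=
    analyticAt_asysD_apply A B C E (analyticAt_extW_apply E x)
  exact MeasureTheory.ae_iff.1 <|
    ae_isCtrb_of_analyticAt MeasureTheory.volume hA (fun _ _ _ => analyticAt_const) h
end
end
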